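/- Let N ≥ 1, p, q ≥ 0, r₁, r₂ ∈ [1,∞), and set P = N(p/r₂ − 1/r₁), Q = N(q/r₁ − 1/r₂). Assume P > 0 and Q > 0. Then there exist positive constants γ₄ and C (independent of the data) with the following property: for all nonnegative measurable u₀, v₀ on ℝ^N, setting W₀ = u₀^{r₁} + v₀^{r₂}, if S(t)W₀ ∈ L^∞(ℝ^N) for all t > 0 and ∫₀^T ( ‖S(s)W₀‖_{L^∞(ℝ^N)}^{P/N} + ‖S(s)W₀‖_{L^∞(ℝ^N)}^{Q/N} ) ds ≤ γ₄ for some T > 0, then the system (S) possesses a solution (u,v) on ℝ^N × (0, T] satisfying 0 ≤ u(x,t)^{r₁} + v(x,t)^{r₂} ≤ C [S(t)W₀](x) for a.e. x ∈ ℝ^N and all t ∈ (0, T]. -/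

import Mathlib

open MeasureTheory ENNReal Filter

noncomputable section

/-- Euclidean space `ℝ^N`. -/
abbrev Euc (N : ℕ) := EuclideanSpace ℝ (Fin N)

/-- The heat semigroup applied to a (nonnegative) function `φ` on `ℝ^N`, with values in `[0,∞]`:
`[S(t)φ](x) = ∫ (4πt)^{-N/2} exp(-|x-y|²/(4t)) φ(y) dy`. -/
noncomputable def heatS (N : ℕ) (t : ℝ) (φ : Euc N → ℝ) (x : Euc N) : ℝ≥0∞ :=
  ∫⁻ y, ENNReal.ofReal
    ((4 * Real.pi * t) ^ (-(N : ℝ) / 2) * Real.exp (-‖x - y‖ ^ 2 / (4 * t)) * φ y)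

/-- The `L^∞` norm of `S(t)φ` on `ℝ^N`. -/
noncomputable def heatSup (N : ℕ) (t : ℝ) (φ : Euc N → ℝ) : ℝ≥0∞ :=
  essSup (heatS N t φ) volume

/-- The `L^{r,∞}(E)` quasinorm: for `1 < r < ∞` it is
`sup_{λ>0} λ |{x ∈ E : |f x| > λ}|^{1/r}`; for `r = 1` (resp. `r = ∞`)
it is the usual `L¹(E)` (resp. `L^∞(E)`) norm. -/
noncomputable def wnorm (N : ℕ) (r : ℝ≥0∞) (f : Euc N → ℝ) (E : Set (Euc N)) : ℝ≥0∞ :=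
  if r = 1 then ∫⁻ x in E, ENNReal.ofReal |f x|
  else if r = ⊤ then essSup (fun x => ENNReal.ofReal |f x|) (volume.restrict E)
  else ⨆ (l : ℝ) (_ : 0 < l), ENNReal.ofReal l * (volume {x ∈ E | l < |f x|}) ^ (1 / r.toReal)

/-- The uniformly local quasinorm `|||f|||_{r,ρ} = sup_x ‖f‖_{L^{r,∞}(B(x,ρ))}`
(for `r = ∞` it is the `L^∞(ℝ^N)` norm). -/
noncomputable def ulocNorm (N : ℕ) (r : ℝ≥0∞) (ρ : ℝ) (f : Euc N → ℝ) : ℝ≥0∞ :=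
  if r = ⊤ then essSup (fun x => ENNReal.ofReal |f x|) volume
  else ⨆ x : Euc N, wnorm N r f (Metric.ball x ρ)

/-- `u ∈ L^∞(τ, T-τ; L^∞(ℝ^N))` for every `τ ∈ (0, T/2)`. -/
def LocBdd (N : ℕ) (T : ℝ≥0∞) (u : Euc N → ℝ → ℝ) : Prop :=
  ∀ τ : ℝ, 0 < τ → ENNReal.ofReal (2 * τ) < T →
    ∃ M : ℝ, ∀ t : ℝ, τ ≤ t → ENNReal.ofReal (t + τ) ≤ T →
      ∀ᵐ x ∂(volume : Measure (Euc N)), |u x t| ≤ M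

/-- Regularity requirements on a pair `(u,v)`: nonnegativity, joint measurability and
uniform boundedness away from `t = 0` and `t = T`. -/
def PairRegular (N : ℕ) (T : ℝ≥0∞) (u v : Euc N → ℝ → ℝ) : Prop :=
  (∀ x t, 0 ≤ u x t) ∧ (∀ x t, 0 ≤ v x t) ∧
  Measurable (Function.uncurry u) ∧ Measurable (Function.uncurry v) ∧
  LocBdd N T u ∧ LocBdd N T v

/-- The Duhamel identities for the system (S) `∂ₜu = Δu + v^p`, `∂ₜv = Δv + u^q` at time `t`. -/
def DuhamelSys (N : ℕ) (p q : ℝ) (u₀ v₀ : Euc N → ℝ) (u v : Euc N → ℝ → ℝ) (t : ℝ) : Prop :=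
  (∀ᵐ x ∂(volume : Measure (Euc N)), ENNReal.ofReal (u x t) =
      heatS N t u₀ x + ∫⁻ s in Set.Ioo 0 t, heatS N (t - s) (fun y => v y s ^ p) x) ∧
  (∀ᵐ x ∂(volume : Measure (Euc N)), ENNReal.ofReal (v x t) =
      heatS N t v₀ x + ∫⁻ s in Set.Ioo 0 t, heatS N (t - s) (fun y => u y s ^ q) x)

/-- The Duhamel inequalities (`≥`, with finite left-hand side) for the system (S) at time `t`. -/
def DuhamelSuperSys (N : ℕ) (p q : ℝ) (u₀ v₀ : Euc N → ℝ) (u v : Euc N → ℝ → ℝ) (t : ℝ) : Prop :=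
  (∀ᵐ x ∂(volume : Measure (Euc N)),
      heatS N t u₀ x + (∫⁻ s in Set.Ioo 0 t, heatS N (t - s) (fun y => v y s ^ p) x) ≤
        ENNReal.ofReal (u x t)) ∧
  (∀ᵐ x ∂(volume : Measure (Euc N)),
      heatS N t v₀ x + (∫⁻ s in Set.Ioo 0 t, heatS N (t - s) (fun y => u y s ^ q) x) ≤
        ENNReal.ofReal (v x t))

/-- `(u,v)` is a solution of the system (S) on `ℝ^N × (0,T)`. -/
def IsSolSys (N : ℕ) (p q : ℝ) (u₀ v₀ : Euc N → ℝ) (T : ℝ≥0∞) (u v : Euc N → ℝ → ℝ) : Prop :=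
  PairRegular N T u v ∧
  ∀ t : ℝ, 0 < t → ENNReal.ofReal t < T → DuhamelSys N p q u₀ v₀ u v t

/-- `(u,v)` is a supersolution of the system (S) on `ℝ^N × (0,T)`. -/
def IsSuperSys (N : ℕ) (p q : ℝ) (u₀ v₀ : Euc N → ℝ) (T : ℝ≥0∞) (u v : Euc N → ℝ → ℝ) : Prop :=
  PairRegular N T u v ∧
  ∀ t : ℝ, 0 < t → ENNReal.ofReal t < T → DuhamelSuperSys N p q u₀ v₀ u v t

/-- `(u,v)` is the minimal solution of the system (S) on `ℝ^N × (0,T)`. -/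
def IsMinSolSys (N : ℕ) (p q : ℝ) (u₀ v₀ : Euc N → ℝ) (T : ℝ≥0∞)
    (u v : Euc N → ℝ → ℝ) : Prop :=
  IsSolSys N p q u₀ v₀ T u v ∧
  ∀ u' v' : Euc N → ℝ → ℝ, IsSolSys N p q u₀ v₀ T u' v' →
    ∀ t : ℝ, 0 < t → ENNReal.ofReal t < T →
      (∀ᵐ x ∂(volume : Measure (Euc N)), u x t ≤ u' x t) ∧
      (∀ᵐ x ∂(volume : Measure (Euc N)), v x t ≤ v' x t)

/-- Regularity requirements on a scalar function `w`. -/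
def ScalarRegular (N : ℕ) (T : ℝ≥0∞) (w : Euc N → ℝ → ℝ) : Prop :=
  (∀ x t, 0 ≤ w x t) ∧ Measurable (Function.uncurry w) ∧ LocBdd N T w

/-- The Duhamel identity for the scalar problem (E) `∂ₜw = Δw + α w^A + β w^B` at time `t`. -/
def DuhamelScalar (N : ℕ) (α β A B : ℝ) (w₀ : Euc N → ℝ) (w : Euc N → ℝ → ℝ) (t : ℝ) : Prop :=
  ∀ᵐ x ∂(volume : Measure (Euc N)), ENNReal.ofReal (w x t) =
    heatS N t w₀ x +
      ∫⁻ s in Set.Ioo 0 t, heatS N (t - s) (fun y => α * w y s ^ A + β * w y s ^ B) x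

/-- The Duhamel inequality (`≥`, with finite left-hand side) for the scalar problem (E). -/
def DuhamelSuperScalar (N : ℕ) (α β A B : ℝ) (w₀ : Euc N → ℝ) (w : Euc N → ℝ → ℝ)
    (t : ℝ) : Prop :=
  ∀ᵐ x ∂(volume : Measure (Euc N)),
    heatS N t w₀ x +
        (∫⁻ s in Set.Ioo 0 t, heatS N (t - s) (fun y => α * w y s ^ A + β * w y s ^ B) x) ≤
      ENNReal.ofReal (w x t)

/-- `w` is a solution of the scalar problem (E) on `ℝ^N × (0,T)`. -/
def IsSolScalar (N : ℕ) (α β A B : ℝ) (w₀ : Euc N → ℝ) (T : ℝ≥0∞)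
    (w : Euc N → ℝ → ℝ) : Prop :=
  ScalarRegular N T w ∧
  ∀ t : ℝ, 0 < t → ENNReal.ofReal t < T → DuhamelScalar N α β A B w₀ w t

/-- `w` is a supersolution of the scalar problem (E) on `ℝ^N × (0,T)`. -/
def IsSuperScalar (N : ℕ) (α β A B : ℝ) (w₀ : Euc N → ℝ) (T : ℝ≥0∞)
    (w : Euc N → ℝ → ℝ) : Prop :=
  ScalarRegular N T w ∧
  ∀ t : ℝ, 0 < t → ENNReal.ofReal t < T → DuhamelSuperScalar N α β A B w₀ w t

/-- The Duhamel identities for the strongly coupled system (SC)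
`∂ₜu = Δu + u^{p₁} v^{p₂}`, `∂ₜv = Δv + u^{q₁} v^{q₂}` at time `t`. -/
def DuhamelSC (N : ℕ) (p₁ p₂ q₁ q₂ : ℝ) (u₀ v₀ : Euc N → ℝ) (u v : Euc N → ℝ → ℝ)
    (t : ℝ) : Prop :=
  (∀ᵐ x ∂(volume : Measure (Euc N)), ENNReal.ofReal (u x t) =
      heatS N t u₀ x +
        ∫⁻ s in Set.Ioo 0 t, heatS N (t - s) (fun y => u y s ^ p₁ * v y s ^ p₂) x) ∧
  (∀ᵐ x ∂(volume : Measure (Euc N)), ENNReal.ofReal (v x t) =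
      heatS N t v₀ x +
        ∫⁻ s in Set.Ioo 0 t, heatS N (t - s) (fun y => u y s ^ q₁ * v y s ^ q₂) x)

/-- `(u,v)` is a solution of the strongly coupled system (SC) on `ℝ^N × (0,T)`. -/
def IsSolSC (N : ℕ) (p₁ p₂ q₁ q₂ : ℝ) (u₀ v₀ : Euc N → ℝ) (T : ℝ≥0∞)
    (u v : Euc N → ℝ → ℝ) : Prop :=
  PairRegular N T u v ∧
  ∀ t : ℝ, 0 < t → ENNReal.ofReal t < T → DuhamelSC N p₁ p₂ q₁ q₂ u₀ v₀ u v t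

/-- Real heat kernel. -/
def hkR (N : ℕ) (t : ℝ) (z : Euc N) : ℝ :=
  (4 * Real.pi * t) ^ (-(N : ℝ) / 2) * Real.exp (-‖z‖ ^ 2 / (4 * t))

/-- Extended-nonnegative heat kernel. -/
def hk (N : ℕ) (t : ℝ) (z : Euc N) : ℝ≥0∞ := ENNReal.ofReal (hkR N t z)

/-- Heat semigroup on extended nonnegative functions. -/
def hS (N : ℕ) (t : ℝ) (f : Euc N → ℝ≥0∞) (x : Euc N) : ℝ≥0∞ := ∫⁻ y, hk N t (x - y) * f y

lemma hkR_nonneg (N : ℕ) {t : ℝ} (ht : 0 < t) (z : Euc N) : 0 ≤ hkR N t z := by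
  unfold hkR; positivity

lemma heatS_eq (N : ℕ) {t : ℝ} (ht : 0 < t) (φ : Euc N → ℝ) (x : Euc N) :
    heatS N t φ x = hS N t (fun y => ENNReal.ofReal (φ y)) x := by
  unfold heatS hS hk
  refine lintegral_congr fun y => ?_
  rw [← ENNReal.ofReal_mul (hkR_nonneg N ht _)]
  rfl

lemma measurable_hkR (N : ℕ) : Measurable (fun z : ℝ × Euc N => hkR N z.1 z.2) := by
  unfold hkR
  fun_prop

lemma measurable_hk (N : ℕ) : Measurable (fun z : ℝ × Euc N => hk N z.1 z.2) :=
  (measurable_hkR N).ennreal_ofReal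

@[fun_prop]
lemma Measurable.hk' {α : Type*} [MeasurableSpace α] {N : ℕ} {f : α → ℝ} {g : α → Euc N}
    (hf : Measurable f) (hg : Measurable g) : Measurable (fun a => hk N (f a) (g a)) :=
  (measurable_hk N).comp (hf.prodMk hg)

lemma lintegral_hk (N : ℕ) {t : ℝ} (ht : 0 < t) : ∫⁻ z, hk N t z = 1 := by
  have hb : 0 < 1 / (4 * t) := by positivity
  have h := GaussianFourier.integral_rexp_neg_mul_sq_norm (V := Euc N) hb
  have hpos : 0 < (Real.pi / (1 / (4 * t))) ^ ((Module.finrank ℝ (Euc N) : ℝ) / 2) := by positivity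
  have hint : Integrable (fun v : Euc N => Real.exp (-(1 / (4 * t)) * ‖v‖ ^ 2)) := by
    by_contra hc
    rw [integral_undef hc] at h
    linarith
  have e : ∀ z : Euc N, hkR N t z =
      (4 * Real.pi * t) ^ (-(N : ℝ) / 2) * Real.exp (-(1 / (4 * t)) * ‖z‖ ^ 2) := by
    intro z; unfold hkR; congr 2; ring
  unfold hk
  rw [← ofReal_integral_eq_lintegral_ofReal]
  · simp_rw [e]
    rw [integral_const_mul, h, finrank_euclideanSpace_fin]
    have : Real.pi / (1 / (4 * t)) = 4 * Real.pi * t := by field_simp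
    rw [this, ← Real.rpow_add (by positivity)]
    have : -(N : ℝ) / 2 + N / 2 = 0 := by ring
    simp [this]
  · rw [show hkR N t = _ from funext e]; exact hint.const_mul _
  · exact Filter.Eventually.of_forall fun z => hkR_nonneg N ht z

lemma lintegral_hk_sub_left (N : ℕ) {t : ℝ} (ht : 0 < t) (x : Euc N) :
    ∫⁻ y, hk N t (x - y) = 1 := by
  rw [lintegral_sub_left_eq_self (fun z => hk N t z) x, lintegral_hk N ht]

lemma lintegral_hk_sub_right (N : ℕ) {t : ℝ} (ht : 0 < t) (x : Euc N) :
    ∫⁻ y, hk N t (y - x) = 1 := by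
  rw [lintegral_sub_right_eq_self (fun z => hk N t z) x, lintegral_hk N ht]

lemma hk_mul (N : ℕ) {a b : ℝ} (ha : 0 < a) (hb : 0 < b) (x y z : Euc N) :
    hk N a (x - z) * hk N b (z - y) = hk N (a + b) (x - y) *
      hk N (a * b / (a + b)) (z - ((b / (a + b)) • x + (a / (a + b)) • y)) := by
  unfold hk
  have hab : 0 < a + b := by positivity
  have hc : 0 < a * b / (a + b) := by positivity
  rw [← ENNReal.ofReal_mul (hkR_nonneg N ha _), ← ENNReal.ofReal_mul (hkR_nonneg N hab _)]
  congr 1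
  unfold hkR
  have e1 : (4 * Real.pi * a) ^ (-(N : ℝ) / 2) * (4 * Real.pi * b) ^ (-(N : ℝ) / 2) =
      (4 * Real.pi * (a + b)) ^ (-(N : ℝ) / 2) *
        (4 * Real.pi * (a * b / (a + b))) ^ (-(N : ℝ) / 2) := by
    rw [← Real.mul_rpow (by positivity) (by positivity),
      ← Real.mul_rpow (by positivity) (by positivity)]
    congr 1
    field_simp
  have e2 : -‖x - z‖ ^ 2 / (4 * a) + -‖z - y‖ ^ 2 / (4 * b) =
      -‖x - y‖ ^ 2 / (4 * (a + b)) +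
      -‖z - ((b / (a + b)) • x + (a / (a + b)) • y)‖ ^ 2 / (4 * (a * b / (a + b))) := by
    have h1 : z - ((b / (a + b)) • x + (a / (a + b)) • y) =
        (a / (a + b)) • (z - y) - (b / (a + b)) • (x - z) := by
      have : z = (a / (a + b)) • z + (b / (a + b)) • z := by
        rw [← add_smul, ← add_div, div_self hab.ne', one_smul]
      nth_rewrite 1 [this]
      simp only [smul_sub]
      abel
    have h2 : x - y = (z - y) + (x - z) := by abel
    rw [h1, h2, norm_sub_sq_real ((a / (a + b)) • (z - y)), norm_add_sq_real, norm_smul, norm_smul, inner_smul_left,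
      inner_smul_right]
    generalize ‖z - y‖ = A
    generalize ‖x - z‖ = B
    generalize inner ℝ (z - y) (x - z) = I
    rw [Real.norm_of_nonneg (by positivity), Real.norm_of_nonneg (by positivity)]
    simp only [conj_trivial]
    field_simp
    ring
  calc _ = ((4 * Real.pi * a) ^ (-(N : ℝ) / 2) * (4 * Real.pi * b) ^ (-(N : ℝ) / 2)) *
        (Real.exp (-‖x - z‖ ^ 2 / (4 * a)) * Real.exp (-‖z - y‖ ^ 2 / (4 * b))) := by ring
    _ = _ := by rw [e1, ← Real.exp_add, e2, Real.exp_add]; ring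

lemma hS_hS (N : ℕ) {a b : ℝ} (ha : 0 < a) (hb : 0 < b) {f : Euc N → ℝ≥0∞} (hf : Measurable f)
    (x : Euc N) : hS N a (hS N b f) x = hS N (a + b) f x := by
  unfold hS
  have hab : 0 < a + b := by positivity
  have hc : 0 < a * b / (a + b) := by positivity
  calc ∫⁻ z, hk N a (x - z) * ∫⁻ y, hk N b (z - y) * f y
      = ∫⁻ z, ∫⁻ y, hk N a (x - z) * (hk N b (z - y) * f y) := by
        refine lintegral_congr fun z => ?_
        rw [lintegral_const_mul _ (by fun_prop)]
    _ = ∫⁻ y, ∫⁻ z, hk N a (x - z) * (hk N b (z - y) * f y) := by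
        rw [lintegral_lintegral_swap]
        fun_prop
    _ = _ := by
        refine lintegral_congr fun y => ?_
        simp_rw [← mul_assoc, hk_mul N ha hb]
        rw [lintegral_mul_const _ (by fun_prop), lintegral_const_mul _ (by fun_prop),
          lintegral_hk_sub_right N hc, mul_one]

lemma hS_mono (N : ℕ) (t : ℝ) {f g : Euc N → ℝ≥0∞} (h : ∀ᵐ y, f y ≤ g y) (x : Euc N) :
    hS N t f x ≤ hS N t g x := by
  unfold hS
  refine lintegral_mono_ae ?_
  filter_upwards [h] with y hy
  gcongr

lemma hS_const_mul (N : ℕ) (t : ℝ) {f : Euc N → ℝ≥0∞} (hf : Measurable f) (c : ℝ≥0∞) (x : Euc N) :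
    hS N t (fun y => c * f y) x = c * hS N t f x := by
  unfold hS
  rw [← lintegral_const_mul _ (by fun_prop)]
  refine lintegral_congr fun y => ?_
  ring

lemma hS_jensen (N : ℕ) {t : ℝ} (ht : 0 < t) {f : Euc N → ℝ≥0∞} (hf : Measurable f) {r : ℝ}
    (hr : 1 ≤ r) (x : Euc N) : hS N t (fun y => f y ^ (1 / r)) x ≤ (hS N t f x) ^ (1 / r) := by
  have hr0 : r ≠ 0 := by positivity
  let μ : Measure (Euc N) := volume.withDensity (fun y => hk N t (x - y))
  have hk : Measurable (fun y => hk N t (x - y)) := by fun_prop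
  have hμ : IsProbabilityMeasure μ := by
    constructor
    rw [withDensity_apply _ MeasurableSet.univ, Measure.restrict_univ, lintegral_hk_sub_left N ht]
  have h := eLpNorm'_le_eLpNorm'_of_exponent_le (f := fun y => f y ^ (1 / r)) one_pos hr μ
    (by fun_prop)
  simp only [eLpNorm'_eq_lintegral_enorm, enorm_eq_self, ENNReal.rpow_one, div_one,
    ← ENNReal.rpow_mul, one_div, inv_mul_cancel₀ hr0] at h
  rw [lintegral_withDensity_eq_lintegral_mul _ hk (by fun_prop),
    lintegral_withDensity_eq_lintegral_mul _ hk (by fun_prop)] at h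
  simpa [hS] using h

lemma measurable_hS (N : ℕ) {f : Euc N → ℝ≥0∞} (hf : Measurable f) :
    Measurable (fun z : Euc N × ℝ => hS N z.2 f z.1) := by
  unfold hS
  apply Measurable.lintegral_prod_right (f := fun (z : Euc N × ℝ) y => hk N z.2 (z.1 - y) * f y)
  unfold Function.uncurry
  fun_prop

/-- Duhamel operator. -/
def duh (N : ℕ) (p : ℝ) (f : Euc N → ℝ≥0∞) (V : Euc N × ℝ → ℝ≥0∞) (z : Euc N × ℝ) : ℝ≥0∞ :=
  hS N z.2 f z.1 + ∫⁻ s in Set.Ioo 0 z.2, hS N (z.2 - s) (fun y => V (y, s) ^ p) z.1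

lemma measurable_duh_inner (N : ℕ) (p : ℝ) {V : Euc N × ℝ → ℝ≥0∞} (hV : Measurable V) :
    Measurable (fun w : (Euc N × ℝ) × ℝ =>
      hS N (w.1.2 - w.2) (fun y => V (y, w.2) ^ p) w.1.1) := by
  unfold hS
  apply Measurable.lintegral_prod_right
    (f := fun (w : (Euc N × ℝ) × ℝ) y => hk N (w.1.2 - w.2) (w.1.1 - y) * V (y, w.2) ^ p)
  unfold Function.uncurry
  fun_prop

lemma measurable_duh (N : ℕ) (p : ℝ) {f : Euc N → ℝ≥0∞} (hf : Measurable f)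
    {V : Euc N × ℝ → ℝ≥0∞} (hV : Measurable V) : Measurable (duh N p f V) := by
  unfold duh
  refine (measurable_hS N hf).add ?_
  let S : Set ((Euc N × ℝ) × ℝ) := {w | 0 < w.2 ∧ w.2 < w.1.2}
  have hS' : MeasurableSet S :=
    (measurableSet_lt measurable_const measurable_snd).inter
      (measurableSet_lt measurable_snd (measurable_snd.comp measurable_fst))
  have h := (measurable_duh_inner N p hV).indicator hS'
  have h2 := h.lintegral_prod_right' (ν := (volume : Measure ℝ))
  convert h2 using 2 with z
  rw [← lintegral_indicator measurableSet_Ioo]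
  rfl

lemma duh_mono (N : ℕ) {p : ℝ} (hp : 0 ≤ p) (f : Euc N → ℝ≥0∞) {V V' : Euc N × ℝ → ℝ≥0∞}
    (h : V ≤ V') : duh N p f V ≤ duh N p f V' := by
  intro z
  unfold duh
  gcongr with s
  exact hS_mono N _ (Filter.Eventually.of_forall fun y => by gcongr; exact h _) _

lemma duh_iSup (N : ℕ) {p : ℝ} (hp : 0 < p) (f : Euc N → ℝ≥0∞) {V : ℕ → Euc N × ℝ → ℝ≥0∞}
    (hV : ∀ n, Measurable (V n)) (hm : Monotone V) (z : Euc N × ℝ) :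
    duh N p f (fun w => ⨆ n, V n w) z = ⨆ n, duh N p f (V n) z := by
  have hmeas : ∀ n, Measurable (fun s => hS N (z.2 - s) (fun y => V n (y, s) ^ p) z.1) :=
    fun n => by
      have hz : Measurable (fun s : ℝ => (z, s)) := measurable_prodMk_left
      have h := (measurable_duh_inner N p (hV n)).comp hz
      simp only [Function.comp_def] at h
      exact h
  unfold duh
  rw [← ENNReal.add_iSup, ← lintegral_iSup hmeas]
  · congr 1
    refine lintegral_congr fun s => ?_
    unfold hS
    rw [← lintegral_iSup]
    · refine lintegral_congr fun y => ?_
      rw [← ENNReal.mul_iSup]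
      congr 1
      exact (ENNReal.orderIsoRpow p hp).map_iSup _
    · intro n
      have := hV n
      fun_prop
    · intro m n hmn y
      dsimp only
      gcongr
      exact hm hmn _
  · intro m n hmn s
    exact hS_mono N _ (Filter.Eventually.of_forall fun y => by gcongr; exact hm hmn _) _

lemma duh_bound (N : ℕ) {p a r₁ r₂ : ℝ} (hp : 0 ≤ p) (ha : 0 ≤ a) (hr₁ : 1 ≤ r₁)
    (hpa : p / r₂ = a + 1 / r₁) {f w₀ : Euc N → ℝ≥0∞} (hw : Measurable w₀)
    (hf : ∀ y, f y ≤ w₀ y ^ (1 / r₁)) {T : ℝ}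
    (hI : 2 ^ p * ∫⁻ s in Set.Ioo 0 T, (essSup (hS N s w₀) volume) ^ a ≤ 1)
    {V : Euc N × ℝ → ℝ≥0∞}
    (hV : ∀ y s, 0 < s → s ≤ T → V (y, s) ≤ 2 * hS N s w₀ y ^ (1 / r₂))
    (x : Euc N) {t : ℝ} (ht : 0 < t) (htT : t ≤ T) :
    duh N p f V (x, t) ≤ 2 * hS N t w₀ x ^ (1 / r₁) := by
  have hr0 : 0 < 1 / r₁ := by positivity
  by_cases htop : hS N t w₀ x = ⊤
  · rw [htop, ENNReal.top_rpow_of_pos hr0, ENNReal.mul_top (by norm_num)]; exact le_top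
  have hfin : hS N t w₀ x ^ (1 / r₁) ≠ ⊤ := ENNReal.rpow_ne_top_of_nonneg hr0.le htop
  have h1 : hS N t f x ≤ hS N t w₀ x ^ (1 / r₁) :=
    (hS_mono N t (Filter.Eventually.of_forall hf) x).trans (hS_jensen N ht hw hr₁ x)
  have h2 : ∀ s ∈ Set.Ioo 0 t, hS N (t - s) (fun y => V (y, s) ^ p) x ≤
      2 ^ p * (essSup (hS N s w₀) volume) ^ a * hS N t w₀ x ^ (1 / r₁) := by
    rintro s ⟨hs0, hst⟩
    have hms : Measurable (hS N s w₀) :=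
      (measurable_hS N hw).comp (measurable_prodMk_right (y := s))
    calc _ ≤ hS N (t - s) (fun y => (2 ^ p * (essSup (hS N s w₀) volume) ^ a) *
              hS N s w₀ y ^ (1 / r₁)) x := by
            refine hS_mono N _ ?_ x
            filter_upwards [ENNReal.ae_le_essSup (hS N s w₀)] with y hy
            calc V (y, s) ^ p ≤ (2 * hS N s w₀ y ^ (1 / r₂)) ^ p := by
                  gcongr; exact hV y s hs0 (hst.le.trans htT)
              _ = 2 ^ p * (hS N s w₀ y ^ a * hS N s w₀ y ^ (1 / r₁)) := by
                  rw [ENNReal.mul_rpow_of_nonneg _ _ hp, ← ENNReal.rpow_mul,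
                    ← ENNReal.rpow_add_of_nonneg _ _ ha hr0.le, ← hpa]
                  congr 2
                  ring
              _ ≤ _ := by rw [mul_assoc]; gcongr
      _ = 2 ^ p * (essSup (hS N s w₀) volume) ^ a *
            hS N (t - s) (fun y => hS N s w₀ y ^ (1 / r₁)) x :=
          hS_const_mul N _ (by fun_prop) _ x
      _ ≤ 2 ^ p * (essSup (hS N s w₀) volume) ^ a * (hS N (t - s) (hS N s w₀) x) ^ (1 / r₁) := by
          gcongr
          exact hS_jensen N (by linarith) hms hr₁ x
      _ = _ := by rw [hS_hS N (by linarith) hs0 hw]; simp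
  unfold duh
  calc _ ≤ hS N t w₀ x ^ (1 / r₁) + ∫⁻ s in Set.Ioo 0 t,
          2 ^ p * (essSup (hS N s w₀) volume) ^ a * hS N t w₀ x ^ (1 / r₁) := by
        refine add_le_add h1 (setLIntegral_mono' measurableSet_Ioo h2)
    _ = hS N t w₀ x ^ (1 / r₁) + (2 ^ p * ∫⁻ s in Set.Ioo 0 t,
          (essSup (hS N s w₀) volume) ^ a) * hS N t w₀ x ^ (1 / r₁) := by
        rw [lintegral_mul_const' _ _ hfin, lintegral_const_mul' _ _
          (ENNReal.rpow_ne_top_of_nonneg hp (by norm_num))]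
    _ ≤ hS N t w₀ x ^ (1 / r₁) + 1 * hS N t w₀ x ^ (1 / r₁) := by
        gcongr
        refine le_trans ?_ hI
        gcongr
    _ = _ := by ring

/-- Monotone iteration. -/
def iter (N : ℕ) (p q : ℝ) (f g : Euc N → ℝ≥0∞) :
    ℕ → (Euc N × ℝ → ℝ≥0∞) × (Euc N × ℝ → ℝ≥0∞)
  | 0 => (0, 0)
  | n + 1 => (duh N p f (iter N p q f g n).2, duh N q g (iter N p q f g n).1)

lemma measurable_iter (N : ℕ) (p q : ℝ) {f g : Euc N → ℝ≥0∞} (hf : Measurable f)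
    (hg : Measurable g) (n : ℕ) :
    Measurable (iter N p q f g n).1 ∧ Measurable (iter N p q f g n).2 := by
  induction n with
  | zero => exact ⟨measurable_const, measurable_const⟩
  | succ n ih => exact ⟨measurable_duh N p hf ih.2, measurable_duh N q hg ih.1⟩

lemma iter_mono (N : ℕ) {p q : ℝ} (hp : 0 ≤ p) (hq : 0 ≤ q) (f g : Euc N → ℝ≥0∞) :
    Monotone (iter N p q f g) := by
  refine monotone_nat_of_le_succ fun n => ?_
  induction n with
  | zero => exact ⟨fun _ => zero_le, fun _ => zero_le⟩
  | succ n ih => exact ⟨duh_mono N hp f ih.2, duh_mono N hq g ih.1⟩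

/-- Theorem 3.1 (iii), second part: if `P > 0` and `Q > 0` there are
`γ₄, C > 0` such that `∫₀^T (‖S(s)W₀‖_∞^{P/N} + ‖S(s)W₀‖_∞^{Q/N}) ds ≤ γ₄` for some `T > 0`
implies the existence of a solution of (S) on `ℝ^N × (0, T]` with
`0 ≤ u^{r₁} + v^{r₂} ≤ C S(t)W₀`. -/
theorem statement11 (N : ℕ) (hN : 1 ≤ N) (p q r₁ r₂ : ℝ) (hp : 0 ≤ p) (hq : 0 ≤ q)
    (hr₁ : 1 ≤ r₁) (hr₂ : 1 ≤ r₂) (P Q : ℝ)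
    (hP : P = (N : ℝ) * (p / r₂ - 1 / r₁)) (hQ : Q = (N : ℝ) * (q / r₁ - 1 / r₂))
    (hPpos : 0 < P) (hQpos : 0 < Q) :
    ∃ γ₄ C : ℝ, 0 < γ₄ ∧ 0 < C ∧
      ∀ u₀ v₀ : Euc N → ℝ, Measurable u₀ → Measurable v₀ →
        (∀ x, 0 ≤ u₀ x) → (∀ x, 0 ≤ v₀ x) →
        (∀ t : ℝ, 0 < t → heatSup N t (fun y => u₀ y ^ r₁ + v₀ y ^ r₂) < ⊤) →
        ∀ T : ℝ, 0 < T →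
          (∫⁻ s in Set.Ioo 0 T,
              (heatSup N s (fun y => u₀ y ^ r₁ + v₀ y ^ r₂) ^ (P / (N : ℝ)) +
                heatSup N s (fun y => u₀ y ^ r₁ + v₀ y ^ r₂) ^ (Q / (N : ℝ)))) ≤
            ENNReal.ofReal γ₄ →
          ∃ u v : Euc N → ℝ → ℝ,
            (∀ x t, 0 ≤ u x t) ∧ (∀ x t, 0 ≤ v x t) ∧
            Measurable (Function.uncurry u) ∧ Measurable (Function.uncurry v) ∧
            ∀ t : ℝ, 0 < t → t ≤ T →
              DuhamelSys N p q u₀ v₀ u v t ∧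
              ∀ᵐ x ∂(volume : Measure (Euc N)),
                ENNReal.ofReal (u x t ^ r₁ + v x t ^ r₂) ≤
                  ENNReal.ofReal C * heatS N t (fun y => u₀ y ^ r₁ + v₀ y ^ r₂) x := by
  have hN0 : (0 : ℝ) < N := by exact_mod_cast hN
  set a := P / (N : ℝ) with ha_def
  set b := Q / (N : ℝ) with hb_def
  have ha : 0 < a := by positivity
  have hb : 0 < b := by positivity
  have hpa : p / r₂ = a + 1 / r₁ := by
    rw [ha_def, hP, mul_div_cancel_left₀ _ hN0.ne']; ring
  have hqb : q / r₁ = b + 1 / r₂ := by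
    rw [hb_def, hQ, mul_div_cancel_left₀ _ hN0.ne']; ring
  have h1r₁ : 0 < 1 / r₁ := by positivity
  have h1r₂ : 0 < 1 / r₂ := by positivity
  have hr₁0 : 0 < r₁ := by positivity
  have hr₂0 : 0 < r₂ := by positivity
  have hp' : 0 < p := by
    have h : 0 < p / r₂ := by rw [hpa]; positivity
    rcases hp.lt_or_eq with h' | h'
    · exact h'
    · rw [← h', zero_div] at h; exact absurd h (lt_irrefl _)
  have hq' : 0 < q := by
    have h : 0 < q / r₁ := by rw [hqb]; positivity
    rcases hq.lt_or_eq with h' | h'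
    · exact h'
    · rw [← h', zero_div] at h; exact absurd h (lt_irrefl _)
  refine ⟨2 ^ (-(p + q)), 2 ^ r₁ + 2 ^ r₂, by positivity, by positivity, ?_⟩
  intro u₀ v₀ hu₀ hv₀ hu₀n hv₀n hfin T hT hint
  let f : Euc N → ℝ≥0∞ := fun y => ENNReal.ofReal (u₀ y)
  let g : Euc N → ℝ≥0∞ := fun y => ENNReal.ofReal (v₀ y)
  let w₀ : Euc N → ℝ≥0∞ := fun y => ENNReal.ofReal (u₀ y ^ r₁ + v₀ y ^ r₂)
  have hf : Measurable f := by fun_prop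
  have hg : Measurable g := by fun_prop
  have hw : Measurable w₀ := by fun_prop
  have hfw : ∀ y, f y ≤ w₀ y ^ (1 / r₁) := by
    intro y
    have h0 := Real.rpow_nonneg (hu₀n y) r₁
    have h1 := Real.rpow_nonneg (hv₀n y) r₂
    simp only [f, w₀]
    rw [ENNReal.ofReal_rpow_of_nonneg (by positivity) h1r₁.le]
    apply ENNReal.ofReal_le_ofReal
    calc u₀ y = (u₀ y ^ r₁) ^ (1 / r₁) := by
          rw [← Real.rpow_mul (hu₀n y), mul_one_div_cancel hr₁0.ne', Real.rpow_one]
      _ ≤ _ := Real.rpow_le_rpow h0 (by linarith) h1r₁.le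
  have hgw : ∀ y, g y ≤ w₀ y ^ (1 / r₂) := by
    intro y
    have h0 := Real.rpow_nonneg (hu₀n y) r₁
    have h1 := Real.rpow_nonneg (hv₀n y) r₂
    simp only [g, w₀]
    rw [ENNReal.ofReal_rpow_of_nonneg (by positivity) h1r₂.le]
    apply ENNReal.ofReal_le_ofReal
    calc v₀ y = (v₀ y ^ r₂) ^ (1 / r₂) := by
          rw [← Real.rpow_mul (hv₀n y), mul_one_div_cancel hr₂0.ne', Real.rpow_one]
      _ ≤ _ := Real.rpow_le_rpow h1 (by linarith) h1r₂.le
  have hsup : ∀ s, 0 < s → heatSup N s (fun y => u₀ y ^ r₁ + v₀ y ^ r₂) =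
      essSup (hS N s w₀) volume := by
    intro s hs
    unfold heatSup
    congr 1
    funext x
    exact heatS_eq N hs _ x
  have hIa : ∫⁻ s in Set.Ioo 0 T, (essSup (hS N s w₀) volume) ^ a ≤
      ENNReal.ofReal (2 ^ (-(p + q))) := by
    refine le_trans (setLIntegral_mono' measurableSet_Ioo fun s hs => ?_) hint
    rw [hsup s hs.1]; exact le_self_add
  have hIb : ∫⁻ s in Set.Ioo 0 T, (essSup (hS N s w₀) volume) ^ b ≤
      ENNReal.ofReal (2 ^ (-(p + q))) := by
    refine le_trans (setLIntegral_mono' measurableSet_Ioo fun s hs => ?_) hint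
    rw [hsup s hs.1]; exact le_add_self
  have hγ : ∀ c : ℝ, c ≤ p + q → (2 : ℝ≥0∞) ^ c * ENNReal.ofReal (2 ^ (-(p + q))) ≤ 1 := by
    intro c hc
    have : (2 : ℝ≥0∞) = ENNReal.ofReal 2 := by simp
    rw [this, ENNReal.ofReal_rpow_of_pos two_pos, ← ENNReal.ofReal_mul (by positivity),
      ← Real.rpow_add two_pos, ENNReal.ofReal_le_one]
    exact Real.rpow_le_one_of_one_le_of_nonpos one_le_two (by linarith)
  have hIa' : 2 ^ p * ∫⁻ s in Set.Ioo 0 T, (essSup (hS N s w₀) volume) ^ a ≤ 1 :=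
    (mul_le_mul_right hIa _).trans (hγ p (by linarith))
  have hIb' : 2 ^ q * ∫⁻ s in Set.Ioo 0 T, (essSup (hS N s w₀) volume) ^ b ≤ 1 :=
    (mul_le_mul_right hIb _).trans (hγ q (by linarith))
  let I := iter N p q f g
  have hImeas := measurable_iter N p q hf hg
  have hImono := iter_mono N hp hq f g
  have hbd : ∀ n y s, 0 < s → s ≤ T → (I n).1 (y, s) ≤ 2 * hS N s w₀ y ^ (1 / r₁) ∧
      (I n).2 (y, s) ≤ 2 * hS N s w₀ y ^ (1 / r₂) := by
    intro n
    induction n with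
    | zero => intro y s _ _; exact ⟨zero_le, zero_le⟩
    | succ n ih =>
      intro y s hs hsT
      exact ⟨duh_bound N hp ha.le hr₁ hpa hw hfw hIa' (fun y s h h' => (ih y s h h').2) y hs hsT,
        duh_bound N hq hb.le hr₂ hqb hw hgw hIb' (fun y s h h' => (ih y s h h').1) y hs hsT⟩
  let U : Euc N × ℝ → ℝ≥0∞ := fun z => ⨆ n, (I n).1 z
  let V : Euc N × ℝ → ℝ≥0∞ := fun z => ⨆ n, (I n).2 z
  have hUm : Measurable U := Measurable.iSup fun n => (hImeas n).1
  have hVm : Measurable V := Measurable.iSup fun n => (hImeas n).2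
  have hm1 : Monotone (fun n => (I n).1) := fun m n h => (hImono h).1
  have hm2 : Monotone (fun n => (I n).2) := fun m n h => (hImono h).2
  have hUeq : ∀ z, U z = duh N p f V z := by
    intro z
    rw [duh_iSup N hp' f (fun n => (hImeas n).2) hm2 z]
    exact (Monotone.iSup_nat_add (f := fun n => (I n).1 z) (fun m n h => hm1 h z) 1).symm
  have hVeq : ∀ z, V z = duh N q g U z := by
    intro z
    rw [duh_iSup N hq' g (fun n => (hImeas n).1) hm1 z]
    exact (Monotone.iSup_nat_add (f := fun n => (I n).2 z) (fun m n h => hm2 h z) 1).symm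
  have hUb : ∀ y s, 0 < s → s ≤ T → U (y, s) ≤ 2 * hS N s w₀ y ^ (1 / r₁) :=
    fun y s h h' => iSup_le fun n => (hbd n y s h h').1
  have hVb : ∀ y s, 0 < s → s ≤ T → V (y, s) ≤ 2 * hS N s w₀ y ^ (1 / r₂) :=
    fun y s h h' => iSup_le fun n => (hbd n y s h h').2
  have hwfin : ∀ s, 0 < s → ∀ᵐ y, hS N s w₀ y ≠ ⊤ := by
    intro s hs
    filter_upwards [ENNReal.ae_le_essSup (hS N s w₀)] with y hy
    have := hfin s hs
    rw [hsup s hs] at this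
    exact (hy.trans_lt this).ne
  have hUfin : ∀ s, 0 < s → s ≤ T → ∀ᵐ y, U (y, s) ≠ ⊤ := by
    intro s hs hsT
    filter_upwards [hwfin s hs] with y hy
    exact ((hUb y s hs hsT).trans_lt (ENNReal.mul_lt_top (by norm_num)
      (ENNReal.rpow_lt_top_of_nonneg h1r₁.le hy))).ne
  have hVfin : ∀ s, 0 < s → s ≤ T → ∀ᵐ y, V (y, s) ≠ ⊤ := by
    intro s hs hsT
    filter_upwards [hwfin s hs] with y hy
    exact ((hVb y s hs hsT).trans_lt (ENNReal.mul_lt_top (by norm_num)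
      (ENNReal.rpow_lt_top_of_nonneg h1r₂.le hy))).ne
  have key : ∀ (c : ℝ), 0 ≤ c → ∀ (F : Euc N × ℝ → ℝ≥0∞),
      (∀ s, 0 < s → s ≤ T → ∀ᵐ y, F (y, s) ≠ ⊤) → ∀ x t, t ≤ T →
      (∫⁻ s in Set.Ioo 0 t, heatS N (t - s) (fun y => (F (y, s)).toReal ^ c) x) =
      ∫⁻ s in Set.Ioo 0 t, hS N (t - s) (fun y => F (y, s) ^ c) x := by
    intro c hc F hF x t ht
    refine setLIntegral_congr_fun measurableSet_Ioo fun s hs => ?_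
    rw [heatS_eq N (sub_pos.2 hs.2)]
    unfold hS
    refine lintegral_congr_ae ?_
    filter_upwards [hF s hs.1 (hs.2.le.trans ht)] with y hy
    rw [← ENNReal.ofReal_rpow_of_nonneg ENNReal.toReal_nonneg hc, ENNReal.ofReal_toReal hy]
  refine ⟨fun x t => (U (x, t)).toReal, fun x t => (V (x, t)).toReal,
    fun _ _ => ENNReal.toReal_nonneg, fun _ _ => ENNReal.toReal_nonneg,
    hUm.ennreal_toReal, hVm.ennreal_toReal, ?_⟩
  intro t ht htT
  refine ⟨⟨?_, ?_⟩, ?_⟩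
  · filter_upwards [hUfin t ht htT] with x hx
    rw [key p hp V hVfin x t htT, ENNReal.ofReal_toReal hx, heatS_eq N ht, hUeq]
    rfl
  · filter_upwards [hVfin t ht htT] with x hx
    rw [key q hq U hUfin x t htT, ENNReal.ofReal_toReal hx, heatS_eq N ht, hVeq]
    rfl
  · filter_upwards [hUfin t ht htT, hVfin t ht htT] with x hx hx'
    have two : (2 : ℝ≥0∞) = ENNReal.ofReal 2 := by simp
    have e : ∀ r : ℝ, 0 < r → ∀ F G : ℝ≥0∞, F ≠ ⊤ → F ≤ 2 * G ^ (1 / r) →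
        ENNReal.ofReal (F.toReal ^ r) ≤ ENNReal.ofReal (2 ^ r) * G := by
      intro r hr F G hF hFG
      rw [← ENNReal.ofReal_rpow_of_nonneg ENNReal.toReal_nonneg hr.le, ENNReal.ofReal_toReal hF,
        ← ENNReal.ofReal_rpow_of_pos two_pos, ← two]
      calc F ^ r ≤ (2 * G ^ (1 / r)) ^ r := by gcongr
        _ = _ := by
          rw [ENNReal.mul_rpow_of_nonneg _ _ hr.le, ← ENNReal.rpow_mul,
            one_div_mul_cancel hr.ne', ENNReal.rpow_one]
    rw [heatS_eq N ht, ENNReal.ofReal_add (by positivity) (by positivity),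
      ENNReal.ofReal_add (by positivity) (by positivity), add_mul]
    exact add_le_add (e r₁ hr₁0 _ _ hx (hUb x t ht htT)) (e r₂ hr₂0 _ _ hx' (hVb x t ht htT))
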